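/- arXiv:2003.11127 — 10 statements merged into one kernel-verified Lean document; each statement's English description precedes it below -/
import Mathlib

section
/- Let D be a dendriform family algebra over a field K relative to a semigroup S. Then the bilinear operations defined by x ·_{α,β} y := x ≻_α y + x ≺_β y turn D into an S-relative associative algebra, i.e., (x ·_{α,β} y) ·_{αβ,γ} z = x ·_{α,βγ} (y ·_{β,γ} z) for all x,y,z ∈ D and α,β,γ ∈ S. -/
/-- A dendriform family algebra `D` relative to a semigroup `S`
becomes an `S`-relative associative algebra via
`x ·_{α,β} y := x ≻_α y + x ≺_β y`. -/
theorem dendriformFamily_relative_associative {K S D : Type*} [Field K] [Semigroup S]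
    [AddCommGroup D] [Module K D]
    (prec succ : S → D →ₗ[K] D →ₗ[K] D)
    (h1 : ∀ (x y z : D) (α β : S),
      prec β (prec α x y) z = prec (α * β) x (prec β y z + succ α y z))
    (h2 : ∀ (x y z : D) (α β : S),
      prec β (succ α x y) z = succ α x (prec β y z))
    (h3 : ∀ (x y z : D) (α β : S),
      succ (α * β) (prec β x y + succ α x y) z = succ α x (succ β y z))
    (dot : S → S → D → D → D)
    (hdot : ∀ (α β : S) (x y : D), dot α β x y = succ α x y + prec β x y) :
    ∀ (x y z : D) (α β γ : S),
      dot (α * β) γ (dot α β x y) z = dot α (β * γ) x (dot β γ y z) := by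
  intro x y z α β γ
  simp only [hdot]
  -- Up to the order of the summands, the `≻_{αβ}` term is `h3` and the `≺_γ` term splits
  -- by linearity into `h2` and `h1`; linearity of `x ≻_α _` then regroups the result.
  rw [add_comm (succ α x y) (prec β x y), h3, map_add (prec γ), LinearMap.add_apply, h1, h2,
    map_add (succ α x), add_comm (prec γ y z) (succ β y z)]
  abel
end

section
/- Let Z be a left zinbiel family algebra over a field K relative to a commutative semigroup S. Then the bilinear operations defined by x ·_{α,β} y := x ∗_α y + y ∗_β x turn Z into an S-relative commutative algebra, i.e., (x ·_{α,β} y) ·_{αβ,γ} z = x ·_{α,βγ} (y ·_{β,γ} z) and x ·_{α,β} y = y ·_{β,α} x for all x,y,z ∈ Z and α,β,γ ∈ S. -/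
/-- A left zinbiel family algebra `Z` relative to a commutative
semigroup becomes an `S`-relative commutative algebra via
`x ·_{α,β} y := x ∗_α y + y ∗_β x`. -/
theorem zinbielFamily_relative_commutative {K S Z : Type*} [Field K] [CommSemigroup S]
    [AddCommGroup Z] [Module K Z]
    (ast : S → Z →ₗ[K] Z →ₗ[K] Z)
    (hz : ∀ (x y z : Z) (α β : S),
      ast α x (ast β y z) = ast (α * β) (ast α x y) z + ast (α * β) (ast β y x) z)
    (dot : S → S → Z → Z → Z)
    (hdot : ∀ (α β : S) (x y : Z), dot α β x y = ast α x y + ast β y x) :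
    (∀ (x y z : Z) (α β γ : S),
      dot (α * β) γ (dot α β x y) z = dot α (β * γ) x (dot β γ y z)) ∧
    (∀ (x y : Z) (α β : S), dot α β x y = dot β α y x) := by
  -- The zinbiel identity is symmetric in its first two arguments: left multiplications commute.
  have left_comm : ∀ (x y z : Z) (α β : S), ast α x (ast β y z) = ast β y (ast α x z) := by
    intro x y z α β
    rw [hz x y z α β, hz y x z β α, mul_comm β α, add_comm]
  refine ⟨fun x y z α β γ => ?_, fun x y α β => ?_⟩
  · simp only [hdot, map_add, LinearMap.add_apply]
    -- By the zinbiel identity both sides become sums of right-nested products, which then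
    -- agree up to `left_comm`.
    rw [← hz x y z α β, ← hz y z x β γ, left_comm z x y γ α, left_comm z y x γ β, add_assoc]
  · rw [hdot, hdot, add_comm]
end

section
/- Let P be a left pre-Lie family algebra over a field K relative to a commutative semigroup S. Then the bilinear operations defined by [x,y]_{α,β} := x ∘_α y − y ∘_β x turn P into an S-relative Lie algebra, i.e., [x,y]_{α,β} + [y,x]_{β,α} = 0 and [[x,y]_{α,β}, z]_{αβ,γ} + [[z,x]_{γ,α}, y]_{γα,β} + [[y,z]_{β,γ}, x]_{βγ,α} = 0 for all x,y,z ∈ P and α,β,γ ∈ S. -/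
/-- A left pre-Lie family algebra `P` relative to a commutative
semigroup becomes an `S`-relative Lie algebra via
`[x,y]_{α,β} := x ∘_α y − y ∘_β x`. -/
theorem preLieFamily_relative_lie {K S P : Type*} [Field K] [CommSemigroup S]
    [AddCommGroup P] [Module K P]
    (circ : S → P →ₗ[K] P →ₗ[K] P)
    (hpl : ∀ (x y z : P) (α β : S),
      circ α x (circ β y z) - circ (α * β) (circ α x y) z =
        circ β y (circ α x z) - circ (β * α) (circ β y x) z)
    (br : S → S → P → P → P)
    (hbr : ∀ (α β : S) (x y : P), br α β x y = circ α x y - circ β y x) :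
    (∀ (x y : P) (α β : S), br α β x y + br β α y x = 0) ∧
    (∀ (x y z : P) (α β γ : S),
      br (α * β) γ (br α β x y) z + br (γ * α) β (br γ α z x) y +
        br (β * γ) α (br β γ y z) x = 0) := by
  refine ⟨fun x y α β => ?_, fun x y z α β γ => ?_⟩
  · rw [hbr, hbr]
    abel
  · have h₁ := hpl x y z α β
    have h₂ := hpl z x y γ α
    have h₃ := hpl y z x β γ
    -- Commutativity of `S` lets the two products in each pre-Lie identity share one index.
    rw [mul_comm β α] at h₁
    rw [mul_comm α γ] at h₂
    rw [mul_comm γ β] at h₃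
    simp only [hbr, map_sub, LinearMap.sub_apply]
    -- The Jacobi sum is minus the sum of the three cyclic pre-Lie identities.
    linear_combination (norm := module) -h₁ - h₂ - h₃
end

section
/- Let B be a left pre-Poisson family algebra over a field K relative to a commutative semigroup S. Then the operations x ·_{α,β} y := x ∗_α y + y ∗_β x and [x,y]_{α,β} := x ∘_α y − y ∘_β x turn B into an S-relative Poisson algebra; that is, ·_{α,β} makes B an S-relative commutative algebra, [−,−]_{α,β} makes B an S-relative Lie algebra, and the Leibniz identity [x, y ·_{β,γ} z]_{α,βγ} = [x,y]_{α,β} ·_{αβ,γ} z + y ·_{β,αγ} [x,z]_{α,γ} holds for all x,y,z ∈ B and α,β,γ ∈ S. -/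
/-!
Each condition on the family operations says how left multiplication by `x ·_{α,β} y` or by
`[x, y]_{α,β}` decomposes: under `∗_{αβ}` the product acts as the composite of `x ∗_α` and `y ∗_β`
in either order (so these commute), under `∘_{αβ}` the bracket acts as the commutator of `x ∘_α`
and `y ∘_β`, and the two compatibility conditions treat the mixed cases. Rewriting every left
multiplication by a product or bracket in this way reduces associativity, the Jacobi identity and
the Leibniz identity to cancellations in the additive group `B`.
-/

/-- A left pre-Poisson family algebra `B` relative to a commutative
semigroup becomes an `S`-relative Poisson algebra via
`x ·_{α,β} y := x ∗_α y + y ∗_β x` and `[x,y]_{α,β} := x ∘_α y − y ∘_β x`. -/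
theorem prePoissonFamily_relative_poisson {K S B : Type*} [Field K] [CommSemigroup S]
    [AddCommGroup B] [Module K B]
    (circ ast : S → B →ₗ[K] B →ₗ[K] B)
    (hpl : ∀ (x y z : B) (α β : S),
      circ α x (circ β y z) - circ (α * β) (circ α x y) z =
        circ β y (circ α x z) - circ (β * α) (circ β y x) z)
    (hz : ∀ (x y z : B) (α β : S),
      ast α x (ast β y z) = ast (α * β) (ast α x y) z + ast (α * β) (ast β y x) z)
    (hcompat1 : ∀ (x y z : B) (α β : S),
      ast (α * β) (circ α x y - circ β y x) z =
        circ α x (ast β y z) - ast β y (circ α x z))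
    (hcompat2 : ∀ (x y z : B) (α β : S),
      circ (α * β) (ast α x y + ast β y x) z =
        ast α x (circ β y z) + ast β y (circ α x z))
    (dot : S → S → B → B → B)
    (hdot : ∀ (α β : S) (x y : B), dot α β x y = ast α x y + ast β y x)
    (br : S → S → B → B → B)
    (hbr : ∀ (α β : S) (x y : B), br α β x y = circ α x y - circ β y x) :
    (∀ (x y z : B) (α β γ : S),
      dot (α * β) γ (dot α β x y) z = dot α (β * γ) x (dot β γ y z)) ∧
    (∀ (x y : B) (α β : S), dot α β x y = dot β α y x) ∧
    (∀ (x y : B) (α β : S), br α β x y + br β α y x = 0) ∧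
    (∀ (x y z : B) (α β γ : S),
      br (α * β) γ (br α β x y) z + br (γ * α) β (br γ α z x) y +
        br (β * γ) α (br β γ y z) x = 0) ∧
    (∀ (x y z : B) (α β γ : S),
      br α (β * γ) x (dot β γ y z) =
        dot (α * β) γ (br α β x y) z + dot β (α * γ) y (br α γ x z)) := by
  -- Left multiplication by a product is the composite of left multiplications.
  have act : ∀ (x y z : B) (α β : S),
      ast (α * β) (ast α x y + ast β y x) z = ast α x (ast β y z) := by
    intro x y z α β
    rw [map_add, LinearMap.add_apply, hz]
  have comm : ∀ (x y z : B) (α β : S),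
      ast α x (ast β y z) = ast β y (ast α x z) := by
    intro x y z α β
    rw [← act x y z α β, ← act y x z β α, mul_comm β α, add_comm]
  -- Left multiplication by a bracket is the commutator of left multiplications.
  have lie : ∀ (x y z : B) (α β : S),
      circ (α * β) (circ α x y - circ β y x) z =
        circ α x (circ β y z) - circ β y (circ α x z) := by
    intro x y z α β
    have h := hpl x y z α β
    rw [mul_comm β α] at h
    rw [map_sub, LinearMap.sub_apply, sub_eq_sub_iff_add_eq_add]
    rw [sub_eq_sub_iff_add_eq_add] at h
    rw [add_comm, ← h, add_comm]
  refine ⟨?_, ?_, ?_, ?_, ?_⟩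
  · intro x y z α β γ
    simp only [hdot]
    rw [act, act, map_add, map_add, comm x z y α γ, comm y z x β γ]
    abel
  · intro x y α β
    rw [hdot, hdot, add_comm]
  · intro x y α β
    rw [hbr, hbr]
    abel
  · intro x y z α β γ
    simp only [hbr]
    rw [lie, lie, lie]
    simp only [map_sub]
    abel
  · intro x y z α β γ
    simp only [hbr, hdot]
    rw [hcompat2, hcompat1, hcompat1]
    simp only [map_sub, map_add]
    abel
end

section
/- Let A be an S-relative associative algebra over a field K relative to a semigroup S, and let {R_α : A → A}_{α ∈ S} be a Rota–Baxter family of linear operators on A, i.e., R_α(x) ·_{α,β} R_β(y) = R_{αβ}(R_α(x) ·_{α,β} y + x ·_{α,β} R_β(y)) for all x,y ∈ A and α,β ∈ S. Then the operations x ≺_{α,β} y := x ·_{α,β} R_β(y) and x ≻_{α,β} y := R_α(x) ·_{α,β} y turn A into an S-relative dendriform algebra. -/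
/-- A Rota–Baxter family of operators `{R_α}` on an `S`-relative
associative algebra `A` yields an `S`-relative dendriform structure via
`x ≺_{α,β} y := x ·_{α,β} R_β(y)` and `x ≻_{α,β} y := R_α(x) ·_{α,β} y`. -/
theorem rotaBaxter_relative_dendriform {K S A : Type*} [Field K] [Semigroup S]
    [AddCommGroup A] [Module K A]
    (mul : S → S → A →ₗ[K] A →ₗ[K] A)
    (hassoc : ∀ (x y z : A) (α β γ : S),
      mul (α * β) γ (mul α β x y) z = mul α (β * γ) x (mul β γ y z))
    (R : S → A →ₗ[K] A)
    (hRB : ∀ (x y : A) (α β : S),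
      mul α β (R α x) (R β y) =
        R (α * β) (mul α β (R α x) y + mul α β x (R β y)))
    (prec succ : S → S → A → A → A)
    (hprec : ∀ (α β : S) (x y : A), prec α β x y = mul α β x (R β y))
    (hsucc : ∀ (α β : S) (x y : A), succ α β x y = mul α β (R α x) y) :
    (∀ (x y z : A) (α β γ : S),
      prec (α * β) γ (prec α β x y) z =
        prec α (β * γ) x (prec β γ y z + succ β γ y z)) ∧
    (∀ (x y z : A) (α β γ : S),
      prec (α * β) γ (succ α β x y) z = succ α (β * γ) x (prec β γ y z)) ∧
    (∀ (x y z : A) (α β γ : S),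
      succ (α * β) γ (prec α β x y + succ α β x y) z =
        succ α (β * γ) x (succ β γ y z)) := by
  refine ⟨fun x y z α β γ => ?_, fun x y z α β γ => ?_, fun x y z α β γ => ?_⟩
  -- In the outer two identities the Rota–Baxter relation, read right to left, turns `R` of the
  -- sum `≺ + ≻` into a product of values of `R`; each identity is then an associativity.
  · rw [hprec, hprec, hprec, hprec, hsucc, hassoc, hRB, add_comm]
  · rw [hprec, hsucc, hsucc, hprec, hassoc]
  · rw [hsucc, hprec, hsucc, hsucc, hsucc, ← hassoc, hRB, add_comm]
end

section
/- Let A be an associative K-algebra over a field K, S a semigroup, and {R_α : A → A}_{α ∈ S} a family of linear operators such that R_α(x)·R_β(y) = R_{αβ}(R_α(x)·y + x·R_β(y)) for all x,y ∈ A and α,β ∈ S. Then the operations x ≺_β y := x·R_β(y) and x ≻_α y := R_α(x)·y turn A into a dendriform family algebra. -/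
/-- A Rota–Baxter family of operators `{R_α}` on an associative
`K`-algebra `A` yields a dendriform family algebra structure via
`x ≺_β y := x * R_β(y)` and `x ≻_α y := R_α(x) * y`. -/
theorem rotaBaxterFamily_dendriformFamily {K S A : Type*} [Field K] [Semigroup S]
    [NonUnitalRing A] [Module K A] [SMulCommClass K A A] [IsScalarTower K A A]
    (R : S → A →ₗ[K] A)
    (hRB : ∀ (x y : A) (α β : S),
      R α x * R β y = R (α * β) (R α x * y + x * R β y))
    (prec succ : S → A → A → A)
    (hprec : ∀ (β : S) (x y : A), prec β x y = x * R β y)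
    (hsucc : ∀ (α : S) (x y : A), succ α x y = R α x * y) :
    (∀ (x y z : A) (α β : S),
      prec β (prec α x y) z = prec (α * β) x (prec β y z + succ α y z)) ∧
    (∀ (x y z : A) (α β : S),
      prec β (succ α x y) z = succ α x (prec β y z)) ∧
    (∀ (x y z : A) (α β : S),
      succ (α * β) (prec β x y + succ α x y) z = succ α x (succ β y z)) := by
  simp only [hprec, hsucc]
  refine ⟨fun x y z α β => ?_, fun x y z α β => mul_assoc _ _ _, fun x y z α β => ?_⟩
  · rw [mul_assoc, hRB, add_comm]
  · rw [← mul_assoc, hRB, add_comm]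
end

section
/- Let D be a dendriform family algebra over a field K relative to a semigroup S. On the K-vector space of finitely supported functions S → D (equivalently D ⊗ K[S]), define operations bilinearly by (x ⊗ α) ≺ (y ⊗ β) := (x ≺_β y) ⊗ (αβ) and (x ⊗ α) ≻ (y ⊗ β) := (x ≻_α y) ⊗ (αβ) on elementary tensors. Then (D ⊗ K[S], ≺, ≻) is an ordinary dendriform algebra, i.e., (x ≺ y) ≺ z = x ≺ (y ≺ z + y ≻ z), (x ≻ y) ≺ z = x ≻ (y ≺ z), and (x ≺ y + x ≻ y) ≻ z = x ≻ (y ≻ z) for all its elements x, y, z. -/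
/-!
All three identities are additive in each of `u`, `v`, `w`, because the two operations are
biadditive (`twisted_add_left`, `twisted_add_right`). By additive induction it is therefore
enough to check them on elementary tensors `single a x`, `single b y`, `single c z`, where
`twisted_single_single` evaluates both sides to single terms supported at `a * b * c`, and the
coefficients agree by the corresponding dendriform family axiom.
-/

section Twisted

variable {K S D : Type*} [Field K] [Semigroup S] [AddCommGroup D] [Module K D]

/-- The biadditive product on finitely supported functions `S → D` sending
`(x ⊗ α, y ⊗ β)` to `m α β x y ⊗ αβ`. The operation `≺` is the case `m α β = ≺_β`, and
`≻` is the case `m α β = ≻_α`. -/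
noncomputable def twisted (m : S → S → D →ₗ[K] D →ₗ[K] D) (f g : S →₀ D) : S →₀ D :=
  f.sum fun α x => g.sum fun β y => Finsupp.single (α * β) (m α β x y)

variable (m : S → S → D →ₗ[K] D →ₗ[K] D)

lemma twisted_add_left (f f' g : S →₀ D) :
    twisted m (f + f') g = twisted m f g + twisted m f' g := by
  classical
  unfold twisted
  apply Finsupp.sum_add_index'
  · intro a; simp
  · intro a x y; simp [Finsupp.sum_add]

lemma twisted_add_right (f g g' : S →₀ D) :
    twisted m f (g + g') = twisted m f g + twisted m f g' := by
  classical
  unfold twisted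
  rw [← Finsupp.sum_add]
  refine Finsupp.sum_congr fun a _ => ?_
  apply Finsupp.sum_add_index'
  · intro b; simp
  · intro b x y; simp

lemma twisted_zero_left (g : S →₀ D) : twisted m 0 g = 0 := by simp [twisted]

lemma twisted_zero_right (f : S →₀ D) : twisted m f 0 = 0 := by simp [twisted]

lemma twisted_single_single (a b : S) (x y : D) :
    twisted m (Finsupp.single a x) (Finsupp.single b y)
      = Finsupp.single (a * b) (m a b x y) := by
  simp [twisted]

/-- Two maps `T, T'` of three variables that are additive in each variable agree as soon as
they agree on elementary tensors. The agreement at `0`, a consequence of additivity, is taken as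
a hypothesis for convenience. -/
lemma eq_of_triadditive {S D : Type*} [AddCommGroup D] (T T' : (S →₀ D) → (S →₀ D) → (S →₀ D) → (S →₀ D))
    (l0 : ∀ v w, T 0 v w = T' 0 v w) (m0 : ∀ u w, T u 0 w = T' u 0 w)
    (r0 : ∀ u v, T u v 0 = T' u v 0)
    (l : ∀ u u' v w, T (u + u') v w = T u v w + T u' v w)
    (l' : ∀ u u' v w, T' (u + u') v w = T' u v w + T' u' v w)
    (c : ∀ u v v' w, T u (v + v') w = T u v w + T u v' w)
    (c' : ∀ u v v' w, T' u (v + v') w = T' u v w + T' u v' w)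
    (r : ∀ u v w w', T u v (w + w') = T u v w + T u v w')
    (r' : ∀ u v w w', T' u v (w + w') = T' u v w + T' u v w')
    (h : ∀ a b d x y z, T (Finsupp.single a x) (Finsupp.single b y) (Finsupp.single d z)
      = T' (Finsupp.single a x) (Finsupp.single b y) (Finsupp.single d z))
    (u v w : S →₀ D) : T u v w = T' u v w := by
  induction u using Finsupp.induction_linear with
  | zero => exact l0 v w
  | add u u' hu hu' => rw [l, l', hu, hu']
  | single a x =>
    induction v using Finsupp.induction_linear with
    | zero => exact m0 _ w
    | add v v' hv hv' => rw [c, c', hv, hv']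
    | single b y =>
      induction w using Finsupp.induction_linear with
      | zero => exact r0 _ _
      | add w w' hw hw' => rw [r, r', hw, hw']
      | single d z => exact h a b d x y z

end Twisted

/-- If `D` is a dendriform family algebra relative to a semigroup
`S`, then `D ⊗ K[S]` (finitely supported functions `S → D`) with the operations
defined bilinearly by `(x ⊗ α) ≺ (y ⊗ β) := (x ≺_β y) ⊗ (αβ)` and
`(x ⊗ α) ≻ (y ⊗ β) := (x ≻_α y) ⊗ (αβ)` is an ordinary dendriform algebra. -/
theorem dendriformFamily_tensor_semigroupAlgebra {K S D : Type*} [Field K]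
    [Semigroup S] [AddCommGroup D] [Module K D]
    (prec succ : S → D →ₗ[K] D →ₗ[K] D)
    (h1 : ∀ (x y z : D) (α β : S),
      prec β (prec α x y) z = prec (α * β) x (prec β y z + succ α y z))
    (h2 : ∀ (x y z : D) (α β : S),
      prec β (succ α x y) z = succ α x (prec β y z))
    (h3 : ∀ (x y z : D) (α β : S),
      succ (α * β) (prec β x y + succ α x y) z = succ α x (succ β y z))
    (precF succF : (S →₀ D) → (S →₀ D) → (S →₀ D))
    (hprecF : ∀ f g : S →₀ D,
      precF f g =
        f.sum fun α x => g.sum fun β y => Finsupp.single (α * β) (prec β x y))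
    (hsuccF : ∀ f g : S →₀ D,
      succF f g =
        f.sum fun α x => g.sum fun β y => Finsupp.single (α * β) (succ α x y)) :
    (∀ u v w : S →₀ D,
      precF (precF u v) w = precF u (precF v w + succF v w)) ∧
    (∀ u v w : S →₀ D, precF (succF u v) w = succF u (precF v w)) ∧
    (∀ u v w : S →₀ D,
      succF (precF u v + succF u v) w = succF u (succF v w)) := by
  obtain rfl : precF = twisted (fun _ β => prec β) := by
    funext f g; exact hprecF f g
  obtain rfl : succF = twisted (fun α _ => succ α) := by
    funext f g; exact hsuccF f g
  refine ⟨?_, ?_, ?_⟩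
  · apply eq_of_triadditive
      (fun u v w => twisted (fun _ β => prec β) (twisted (fun _ β => prec β) u v) w)
      (fun u v w => twisted (fun _ β => prec β) u
        (twisted (fun _ β => prec β) v w + twisted (fun α _ => succ α) v w))
    case h =>
      intro a b d x y z
      simp only [twisted_single_single, ← Finsupp.single_add, h1, mul_assoc]
    all_goals
      intros
      simp only [twisted_add_left, twisted_add_right, twisted_zero_left, twisted_zero_right,
        add_zero]
    all_goals abel
  · apply eq_of_triadditive
      (fun u v w => twisted (fun _ β => prec β) (twisted (fun α _ => succ α) u v) w)
      (fun u v w => twisted (fun α _ => succ α) u (twisted (fun _ β => prec β) v w))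
    case h =>
      intro a b d x y z
      simp only [twisted_single_single, h2, mul_assoc]
    all_goals
      intros
      simp only [twisted_add_left, twisted_add_right, twisted_zero_left, twisted_zero_right]
  · apply eq_of_triadditive
      (fun u v w => twisted (fun α _ => succ α)
        (twisted (fun _ β => prec β) u v + twisted (fun α _ => succ α) u v) w)
      (fun u v w => twisted (fun α _ => succ α) u (twisted (fun α _ => succ α) v w))
    case h =>
      intro a b d x y z
      simp only [twisted_single_single, ← Finsupp.single_add, h3, mul_assoc]
    all_goals
      intros
      simp only [twisted_add_left, twisted_add_right, twisted_zero_left, twisted_zero_right,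
        add_zero]
    all_goals abel
end

section
/- Let P be a left pre-Lie family algebra over a field K relative to a commutative semigroup S. On the K-vector space of finitely supported functions S → P (equivalently P ⊗ K[S]), define an operation bilinearly by (x ⊗ α) ∘ (y ⊗ β) := (x ∘_α y) ⊗ (αβ) on elementary tensors. Then (P ⊗ K[S], ∘) is an ordinary left pre-Lie algebra, i.e., x ∘ (y ∘ z) − (x ∘ y) ∘ z = y ∘ (x ∘ z) − (y ∘ x) ∘ z for all its elements x, y, z. -/
/-! The operation on `S →₀ P` is biadditive, so both sides of the pre-Lie identity are triadditive
and it suffices to compare them on elementary tensors `x ⊗ α`, `y ⊗ β`, `z ⊗ γ`. There all four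
terms are supported at `αβγ`, because `S` is commutative and associative, and the identity between
their values is exactly the pre-Lie family identity. -/

/-- If `P` is a left pre-Lie family algebra relative to a
commutative semigroup `S`, then `P ⊗ K[S]` (finitely supported functions
`S → P`) with the operation defined bilinearly by
`(x ⊗ α) ∘ (y ⊗ β) := (x ∘_α y) ⊗ (αβ)` is an ordinary left pre-Lie algebra. -/
theorem preLieFamily_tensor_semigroupAlgebra {K S P : Type*} [Field K]
    [CommSemigroup S] [AddCommGroup P] [Module K P]
    (circ : S → P →ₗ[K] P →ₗ[K] P)
    (hpl : ∀ (x y z : P) (α β : S),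
      circ α x (circ β y z) - circ (α * β) (circ α x y) z =
        circ β y (circ α x z) - circ (β * α) (circ β y x) z)
    (circF : (S →₀ P) → (S →₀ P) → (S →₀ P))
    (hcircF : ∀ f g : S →₀ P,
      circF f g =
        f.sum fun α x => g.sum fun β y => Finsupp.single (α * β) (circ α x y)) :
    ∀ u v w : S →₀ P,
      circF u (circF v w) - circF (circF u v) w =
        circF v (circF u w) - circF (circF v u) w := by
  -- Biadditivity and the value on elementary tensors.
  have h0l : ∀ g, circF 0 g = 0 := fun g => by simp [hcircF]
  have h0r : ∀ f, circF f 0 = 0 := fun f => by simp [hcircF]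
  have hal : ∀ f f' g, circF (f + f') g = circF f g + circF f' g := fun f f' g => by
    simp only [hcircF]
    apply Finsupp.sum_add_index'
    · simp
    · intro α x x'
      simp [← Finsupp.sum_add]
  have har : ∀ f g g', circF f (g + g') = circF f g + circF f g' := fun f g g' => by
    simp only [hcircF, ← Finsupp.sum_add]
    refine Finsupp.sum_congr fun α _ => Finsupp.sum_add_index' ?_ ?_ <;> simp
  have hs : ∀ α β x y, circF (Finsupp.single α x) (Finsupp.single β y) =
      Finsupp.single (α * β) (circ α x y) := fun α β x y => by simp [hcircF]
  intro u v w
  induction u using Finsupp.induction_linear with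
  | zero => simp [h0l, h0r]
  | add u u' hu hu' =>
    simp only [hal, har, add_sub_add_comm, hu, hu']
  | single α x =>
  induction v using Finsupp.induction_linear with
  | zero => simp [h0l, h0r]
  | add v v' hv hv' =>
    simp only [hal, har, add_sub_add_comm, hv, hv']
  | single β y =>
  induction w using Finsupp.induction_linear with
  | zero => simp [h0r]
  | add w w' hw hw' =>
    simp only [har, add_sub_add_comm, hw, hw']
  | single γ z =>
  simp only [hs]
  rw [mul_assoc α β γ, mul_assoc β α γ, mul_left_comm β α γ, ← mul_assoc α β γ,
    ← Finsupp.single_sub, ← Finsupp.single_sub, hpl]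
end

section
/- Let Z be a left zinbiel family algebra over a field K relative to a commutative semigroup S. On the K-vector space of finitely supported functions S → Z (equivalently Z ⊗ K[S]), define an operation bilinearly by (x ⊗ α) ∗ (y ⊗ β) := (x ∗_α y) ⊗ (αβ) on elementary tensors. Then (Z ⊗ K[S], ∗) is an ordinary left zinbiel algebra, i.e., x ∗ (y ∗ z) = (x ∗ y) ∗ z + (y ∗ x) ∗ z for all its elements x, y, z. -/
/-! The operation `∗` on `S →₀ Z` is additive in each argument and sends a pair of elementary
tensors to an elementary tensor. Both sides of the zinbiel identity are therefore additive in each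
of `u`, `v`, `w`, which reduces it to elementary tensors `x ⊗ α`, `y ⊗ β`, `z ⊗ γ`. There the three
terms are supported at `αβγ` (commutativity of `S` is used for the term `(v ∗ u) ∗ w`), and the
identity of their values is the zinbiel family identity. -/

/-- If `Z` is a left zinbiel family algebra relative to a
commutative semigroup `S`, then `Z ⊗ K[S]` (finitely supported functions
`S → Z`) with the operation defined bilinearly by
`(x ⊗ α) ∗ (y ⊗ β) := (x ∗_α y) ⊗ (αβ)` is an ordinary left zinbiel algebra. -/
theorem zinbielFamily_tensor_semigroupAlgebra {K S Z : Type*} [Field K]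
    [CommSemigroup S] [AddCommGroup Z] [Module K Z]
    (ast : S → Z →ₗ[K] Z →ₗ[K] Z)
    (hz : ∀ (x y z : Z) (α β : S),
      ast α x (ast β y z) = ast (α * β) (ast α x y) z + ast (α * β) (ast β y x) z)
    (astF : (S →₀ Z) → (S →₀ Z) → (S →₀ Z))
    (hastF : ∀ f g : S →₀ Z,
      astF f g =
        f.sum fun α x => g.sum fun β y => Finsupp.single (α * β) (ast α x y)) :
    ∀ u v w : S →₀ Z, astF u (astF v w) = astF (astF u v) w + astF (astF v u) w := by
  have zero_left : ∀ g, astF 0 g = 0 := fun g => by simp [hastF]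
  have zero_right : ∀ f, astF f 0 = 0 := fun f => by simp [hastF]
  have add_left : ∀ f f' g, astF (f + f') g = astF f g + astF f' g := fun f f' g => by
    classical
    simp only [hastF]
    apply Finsupp.sum_add_index
    · simp
    · intro α _ x x'
      simp [Finsupp.sum_add]
  have add_right : ∀ f g g', astF f (g + g') = astF f g + astF f g' := fun f g g' => by
    classical
    simp only [hastF]
    rw [← Finsupp.sum_add]
    refine Finsupp.sum_congr fun α _ => Finsupp.sum_add_index ?_ ?_
    · simp
    · simp
  have single_single : ∀ α β x y, astF (Finsupp.single α x) (Finsupp.single β y) =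
      Finsupp.single (α * β) (ast α x y) := fun α β x y => by simp [hastF]
  intro u v w
  induction u using Finsupp.induction_linear with
  | zero => simp [zero_left, zero_right]
  | add u u' hu hu' => simp only [add_left, add_right, hu, hu']; abel
  | single α x =>
    induction v using Finsupp.induction_linear with
    | zero => simp [zero_left, zero_right]
    | add v v' hv hv' => simp only [add_left, add_right, hv, hv']; abel
    | single β y =>
      induction w using Finsupp.induction_linear with
      | zero => simp [zero_right]
      | add w w' hw hw' => simp only [add_right, hw, hw']; abel
      | single γ z =>
        simp only [single_single]
        rw [hz, Finsupp.single_add, mul_comm β α, mul_assoc]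
end

section
/- Let L be an S-relative Lie algebra over a field K relative to a commutative semigroup S. On the K-vector space of finitely supported functions S → L (equivalently L ⊗ K[S]), define a bracket bilinearly by [x ⊗ α, y ⊗ β] := [x,y]_{α,β} ⊗ (αβ) on elementary tensors. Then L ⊗ K[S] is an ordinary Lie algebra over K, i.e., the bracket satisfies [u,v] + [v,u] = 0 and [[u,v],w] + [[w,u],v] + [[v,w],u] = 0 for all its elements u, v, w. -/
/-!
The bracket on `S →₀ L` is biadditive, so both identities need only be checked on the
generators `Finsupp.single α x`, i.e. on the elementary tensors `x ⊗ α`. There, since `S` is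
commutative and associative, all terms of each identity are supported at the same point of `S`
(`α * β`, resp. `α * β * γ`), and the value at this point is the corresponding relative identity.
-/

/-- If `L` is an `S`-relative Lie algebra relative to a
commutative semigroup `S`, then `L ⊗ K[S]` (finitely supported functions
`S → L`) with the bracket defined bilinearly by
`[x ⊗ α, y ⊗ β] := [x,y]_{α,β} ⊗ (αβ)` is an ordinary Lie algebra. -/
theorem relativeLie_tensor_semigroupAlgebra {K S L : Type*} [Field K]
    [CommSemigroup S] [AddCommGroup L] [Module K L]
    (br : S → S → L →ₗ[K] L →ₗ[K] L)
    (hskew : ∀ (x y : L) (α β : S), br α β x y + br β α y x = 0)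
    (hjacobi : ∀ (x y z : L) (α β γ : S),
      br (α * β) γ (br α β x y) z + br (γ * α) β (br γ α z x) y +
        br (β * γ) α (br β γ y z) x = 0)
    (brF : (S →₀ L) → (S →₀ L) → (S →₀ L))
    (hbrF : ∀ f g : S →₀ L,
      brF f g =
        f.sum fun α x => g.sum fun β y => Finsupp.single (α * β) (br α β x y)) :
    (∀ u v : S →₀ L, brF u v + brF v u = 0) ∧
    (∀ u v w : S →₀ L,
      brF (brF u v) w + brF (brF w u) v + brF (brF v w) u = 0) := by
  classical
  have hsingle : ∀ (α β : S) (x y : L),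
      brF (Finsupp.single α x) (Finsupp.single β y) =
        Finsupp.single (α * β) (br α β x y) := by
    intro α β x y
    rw [hbrF, Finsupp.sum_single_index (by simp), Finsupp.sum_single_index (by simp)]
  have hadd_left : ∀ f g h : S →₀ L, brF (f + g) h = brF f h + brF g h := by
    intro f g h
    simp only [hbrF]
    refine Finsupp.sum_add_index' (by simp) fun α x y => ?_
    simp only [map_add, LinearMap.add_apply, Finsupp.single_add, Finsupp.sum_add]
  have hadd_right : ∀ f g h : S →₀ L, brF f (g + h) = brF f g + brF f h := by
    intro f g h
    simp only [hbrF]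
    rw [← Finsupp.sum_add]
    refine Finsupp.sum_congr fun α _ => ?_
    exact Finsupp.sum_add_index' (by simp) fun β x y => by
      simp only [map_add, Finsupp.single_add]
  have hzero_left : ∀ f : S →₀ L, brF 0 f = 0 := fun f => by simp [hbrF]
  have hzero_right : ∀ f : S →₀ L, brF f 0 = 0 := fun f => by simp [hbrF]
  constructor
  · intro u v
    induction u using Finsupp.induction_linear with
    | zero => simp [hzero_left, hzero_right]
    | add f g hf hg =>
      rw [hadd_left, hadd_right, add_add_add_comm, hf, hg, add_zero]
    | single α x =>
      induction v using Finsupp.induction_linear with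
      | zero => simp [hzero_left, hzero_right]
      | add f g hf hg =>
        rw [hadd_left, hadd_right, add_add_add_comm, hf, hg, add_zero]
      | single β y =>
        rw [hsingle, hsingle, mul_comm β α, ← Finsupp.single_add, hskew, Finsupp.single_zero]
  · -- Splitting one argument of the Jacobi sum splits each of its three terms.
    have hsplit : ∀ a b c a' b' c' : S →₀ L, a + b + c = 0 → a' + b' + c' = 0 →
        (a + a') + (b + b') + (c + c') = 0 := by
      intro a b c a' b' c' h h'
      rw [add_add_add_comm a a', add_add_add_comm (a + b), h, h', add_zero]
    intro u v w
    induction u using Finsupp.induction_linear with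
    | zero => simp [hzero_left, hzero_right]
    | add f g hf hg =>
      simp only [hadd_left, hadd_right]
      exact hsplit _ _ _ _ _ _ hf hg
    | single α x =>
      induction v using Finsupp.induction_linear with
      | zero => simp [hzero_left, hzero_right]
      | add f g hf hg =>
        simp only [hadd_left, hadd_right]
        exact hsplit _ _ _ _ _ _ hf hg
      | single β y =>
        induction w using Finsupp.induction_linear with
        | zero => simp [hzero_left, hzero_right]
        | add f g hf hg =>
          simp only [hadd_left, hadd_right]
          exact hsplit _ _ _ _ _ _ hf hg
        | single γ z =>
          have h₁ : γ * α * β = α * β * γ := by rw [mul_assoc, mul_comm]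
          have h₂ : β * γ * α = α * β * γ := by rw [mul_comm, mul_assoc]
          simp only [hsingle]
          rw [h₁, h₂, ← Finsupp.single_add, ← Finsupp.single_add, hjacobi,
            Finsupp.single_zero]
end
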